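/- arXiv:1808.08851 — 3 statements merged into one kernel-verified Lean document; each statement's English description precedes it below -/
import Mathlib

section
/- Let V be a finite type and K an abstract simplicial complex on V. Then K is flag if and only if for every simplex σ ∈ K the link of σ is the full subcomplex of K on the link's vertex set; explicitly: K is flag if and only if for all σ, τ ∈ K such that every vertex u ∈ τ satisfies u ∉ σ and σ ∪ {u} ∈ K, one has σ ∪ τ ∈ K. -/
/-- A simplicial complex `K` on a finite vertex type `V` is flag (every
minimal nonface has exactly two elements) if and only if for every simplex `σ ∈ K` the
link of `σ` is the full subcomplex of `K` on the link's vertex set: for all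
`σ, τ ∈ K` such that every vertex `u ∈ τ` satisfies `u ∉ σ` and `σ ∪ {u} ∈ K`, one has
`σ ∪ τ ∈ K`. -/
theorem flag_iff_links_full {V : Type*} [Fintype V] [DecidableEq V]
    (K : Set (Finset V))
    (hdown : ∀ σ ∈ K, ∀ τ ⊆ σ, τ ∈ K)
    (hempty : (∅ : Finset V) ∈ K)
    (hvert : ∀ v : V, ({v} : Finset V) ∈ K) :
    (∀ J : Finset V, J ∉ K → (∀ τ ⊂ J, τ ∈ K) → J.card = 2) ↔
      (∀ σ ∈ K, ∀ τ ∈ K,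
        (∀ u ∈ τ, u ∉ σ ∧ insert u σ ∈ K) → σ ∪ τ ∈ K) := by
  constructor
  · intro hflag σ hσ τ hτ hlink
    by_contra hnot
    have key : ∀ n : ℕ, ∀ J : Finset V, J.card = n → J ⊆ σ ∪ τ → J ∈ K := by
      intro n
      induction n using Nat.strong_induction_on with
      | _ n ih =>
        intro J hJ hsub
        by_contra hJK
        have h2 : J.card = 2 := hflag J hJK (fun ρ hρ =>
          ih ρ.card (hJ ▸ Finset.card_lt_card hρ) ρ rfl (hρ.subset.trans hsub))
        obtain ⟨a, b, hab, rfl⟩ := Finset.card_eq_two.mp h2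
        have ha : a ∈ σ ∪ τ := hsub (by simp)
        have hb : b ∈ σ ∪ τ := hsub (by simp)
        rw [Finset.mem_union] at ha hb
        rcases ha with ha | ha <;> rcases hb with hb | hb
        · exact hJK (hdown σ hσ _ (by intro x; simp; rintro (rfl | rfl) <;> assumption))
        · exact hJK (hdown _ (hlink b hb).2 _ (by intro x; simp; rintro (rfl | rfl) <;> simp [*]))
        · exact hJK (hdown _ (hlink a ha).2 _ (by intro x; simp; rintro (rfl | rfl) <;> simp [*]))
        · exact hJK (hdown τ hτ _ (by intro x; simp; rintro (rfl | rfl) <;> assumption))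
    exact hnot (key _ _ rfl (Finset.Subset.refl _))
  · intro hfull J hJ hmin
    by_contra hcard
    have h0 : J.Nonempty := by
      rw [Finset.nonempty_iff_ne_empty]
      rintro rfl
      exact hJ hempty
    obtain ⟨a, ha⟩ := h0
    apply hJ
    have h := hfull {a} (hvert a) (J.erase a) (hmin _ (Finset.erase_ssubset ha)) (by
      intro u hu
      rw [Finset.mem_erase] at hu
      refine ⟨by simpa using hu.1, hmin _ ?_⟩
      rw [Finset.ssubset_iff_subset_ne]
      refine ⟨?_, ?_⟩
      · intro x
        simp
        rintro (rfl | rfl)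
        · exact hu.2
        · exact ha
      · intro he
        exact hcard (he ▸ Finset.card_pair hu.1))
    rwa [← Finset.insert_eq, Finset.insert_erase ha] at h
end

section
/- Let V be a finite type, K a flag abstract simplicial complex on V, and σ₀ ∈ K. Put S = {v ∈ V : v ∉ σ₀ and σ₀ ∪ {v} ∈ K} (the vertex set of the link of σ₀) and let L be the link of σ₀ regarded as a simplicial complex on S, i.e. L = {τ ⊆ S finset : (the image of τ in V) ∪ σ₀ ∈ K}. Then the extension-by-1 map ext maps Z_L into Z_K, the restriction map res maps Z_K into Z_L, and res ∘ ext = id on Z_L; hence Z_L is a retract of Z_K via continuous maps. -/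
open scoped Classical

/-- The moment-angle complex of a simplicial complex `K` on the vertex type `V`, as a
subset of `V → ℂ`. -/
def momentAngleComplex {V : Type*} (K : Set (Finset V)) : Set (V → ℂ) :=
  {z | ∃ σ ∈ K, (∀ v ∈ σ, ‖z v‖ ≤ 1) ∧ (∀ v ∉ σ, ‖z v‖ = 1)}

/-- The extension-by-1 map `ext : (S → ℂ) → (V → ℂ)`. -/
noncomputable def extMap {V : Type*} (S : Set V) (z : S → ℂ) : V → ℂ :=
  fun v => if h : v ∈ S then z ⟨v, h⟩ else 1

/-- The restriction map `res : (V → ℂ) → (S → ℂ)`, `res z = z|_S`. -/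
def resMap {V : Type*} (S : Set V) (z : V → ℂ) : S → ℂ :=
  fun v => z v

/-- In a flag complex, a finset all of whose pairs are faces is a face. -/
theorem flag_mem_of_pairs {V : Type*} [DecidableEq V]
    (K : Set (Finset V))
    (hflag : ∀ J : Finset V, J ∉ K → (∀ τ ⊂ J, τ ∈ K) → J.card = 2)
    (J : Finset V) (hJ : ∀ x ∈ J, ∀ y ∈ J, ({x, y} : Finset V) ∈ K) : J ∈ K := by
  induction J using Finset.strongInduction with
  | H J ih =>
    by_contra hn
    have h2 := hflag J hn (fun τ hτ => ih τ hτ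
      (fun x hx y hy => hJ x (hτ.1 hx) y (hτ.1 hy)))
    obtain ⟨x, y, _, rfl⟩ := Finset.card_eq_two.1 h2
    exact hn (hJ x (by simp) y (by simp))

/-- Let `K` be a flag simplicial complex on a finite vertex type `V` and
`σ₀ ∈ K`. Let `S = {v ∉ σ₀ | σ₀ ∪ {v} ∈ K}` be the vertex set of the link of `σ₀`, and
let `L` be the link of `σ₀` regarded as a simplicial complex on `S`. Then the
extension-by-1 map maps `Z_L` into `Z_K`, the restriction map maps `Z_K` into `Z_L`, and
`res ∘ ext = id` on `Z_L`; hence `Z_L` is a retract of `Z_K` via continuous maps. -/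
theorem momentAngle_link_retract_of_flag {V : Type*} [Fintype V] [DecidableEq V]
    (K : Set (Finset V))
    (hdown : ∀ σ ∈ K, ∀ τ ⊆ σ, τ ∈ K)
    (hempty : (∅ : Finset V) ∈ K)
    (hvert : ∀ v : V, ({v} : Finset V) ∈ K)
    (hflag : ∀ J : Finset V, J ∉ K → (∀ τ ⊂ J, τ ∈ K) → J.card = 2)
    (σ₀ : Finset V) (hσ₀ : σ₀ ∈ K)
    (S : Set V) (hS : S = {v : V | v ∉ σ₀ ∧ insert v σ₀ ∈ K})
    (ZL : Set (S → ℂ))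
    (hZL : ZL = {z : S → ℂ | ∃ τ : Finset S,
      (τ.image Subtype.val ∪ σ₀ ∈ K) ∧
      ∀ v : S, (v ∈ τ → ‖z v‖ ≤ 1) ∧ (v ∉ τ → ‖z v‖ = 1)}) :
    Continuous (extMap S) ∧ Continuous (resMap S) ∧
      (∀ z ∈ ZL, extMap S z ∈ momentAngleComplex K) ∧
      (∀ z ∈ momentAngleComplex K, resMap S z ∈ ZL) ∧
      (∀ z ∈ ZL, resMap S (extMap S z) = z) := by
  subst hZL
  refine ⟨?_, ?_, ?_, ?_, ?_⟩
  · refine continuous_pi fun v => ?_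
    by_cases h : v ∈ S
    · simpa [extMap, h] using continuous_apply (⟨v, h⟩ : S)
    · simpa [extMap, h] using continuous_const
  · exact continuous_pi fun v => continuous_apply v.1
  · rintro z ⟨τ, hτ, hz⟩
    refine ⟨τ.image Subtype.val, hdown _ hτ _ Finset.subset_union_left, ?_, ?_⟩
    · intro v hv
      obtain ⟨w, hw, rfl⟩ := Finset.mem_image.1 hv
      simpa [extMap] using (hz w).1 hw
    · intro v hv
      by_cases h : v ∈ S
      · have : (⟨v, h⟩ : S) ∉ τ := fun h' => hv (Finset.mem_image.2 ⟨_, h', rfl⟩)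
        simpa [extMap, h] using (hz ⟨v, h⟩).2 this
      · simp [extMap, h]
  · rintro z ⟨σ, hσ, h1, h2⟩
    refine ⟨Finset.univ.filter (fun v : S => v.1 ∈ σ), ?_, ?_⟩
    · have key : ∀ x ∈ S, ∀ y ∈ σ₀, ({x, y} : Finset V) ∈ K := by
        intro x hx y hy
        rw [hS] at hx
        refine hdown _ hx.2 _ ?_
        intro w hw
        simp only [Finset.mem_insert, Finset.mem_singleton] at hw ⊢
        rcases hw with rfl | rfl
        · exact Or.inl rfl
        · exact Or.inr hy
      apply flag_mem_of_pairs K hflag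
      have hm : ∀ x ∈ (Finset.univ.filter (fun v : S => v.1 ∈ σ)).image Subtype.val ∪ σ₀,
          (x ∈ S ∧ x ∈ σ) ∨ x ∈ σ₀ := by
        intro x hx
        rcases Finset.mem_union.1 hx with hx | hx
        · obtain ⟨w, hw, rfl⟩ := Finset.mem_image.1 hx
          exact Or.inl ⟨w.2, (Finset.mem_filter.1 hw).2⟩
        · exact Or.inr hx
      intro x hx y hy
      rcases hm x hx with hx | hx <;> rcases hm y hy with hy | hy
      · exact hdown _ hσ _ (Finset.insert_subset hx.2 (Finset.singleton_subset_iff.2 hy.2))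
      · exact key x hx.1 y hy
      · rw [Finset.pair_comm]
        exact key y hy.1 x hx
      · exact hdown _ hσ₀ _ (Finset.insert_subset hx (Finset.singleton_subset_iff.2 hy))
    · intro v
      exact ⟨fun hv => h1 _ (Finset.mem_filter.1 hv).2,
        fun hv => h2 _ (fun h => hv (Finset.mem_filter.2 ⟨Finset.mem_univ _, h⟩))⟩
  · intro z _
    funext v
    simp [resMap, extMap]
end

section
/- Let R = ℤ[v₁, v₂, v₃, v₄, v₅]/I, where I is the ideal generated by v₁ − v₃ − v₄, v₂ − v₄ − v₅, v₁v₃, v₁v₄, v₂v₄, v₂v₅, v₃v₅. Then v₃² ≠ 0 in R (equivalently, the polynomial v₃² does not belong to the ideal I). -/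
open MvPolynomial

/-- Restriction of a polynomial to the line through the origin spanned by `w`. -/
noncomputable def lineMap (w : Fin 5 → ℤ) : MvPolynomial (Fin 5) ℤ →+* Polynomial ℤ :=
  eval₂Hom Polynomial.C (fun i => Polynomial.C (w i) * Polynomial.X)

lemma lineMap_X (w : Fin 5 → ℤ) (i : Fin 5) :
    lineMap w (X i) = Polynomial.C (w i) * Polynomial.X := by
  simp [lineMap]

lemma lineMap_coeff_zero (w : Fin 5 → ℤ) (q : MvPolynomial (Fin 5) ℤ) :
    (lineMap w q).coeff 0 = constantCoeff q := by
  have h : (Polynomial.constantCoeff.comp (lineMap w)) = constantCoeff := by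
    apply MvPolynomial.ringHom_ext
    · intro r
      simp [lineMap]
    · intro i
      simp [lineMap]
  exact congrArg (fun f => f q) h

lemma lineMap_lin (w : Fin 5 → ℤ) (q : MvPolynomial (Fin 5) ℤ) (i j k : Fin 5)
    (h : w i - w j - w k = 0) : lineMap w (q * (X i - X j - X k)) = 0 := by
  have : lineMap w (X i - X j - X k) = Polynomial.C (w i - w j - w k) * Polynomial.X := by
    simp only [map_sub, lineMap_X]
    ring
  rw [map_mul, this, h]
  simp

lemma lineMap_quad (w : Fin 5 → ℤ) (q : MvPolynomial (Fin 5) ℤ) (i j : Fin 5) :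
    (lineMap w (q * (X i * X j))).coeff 2 = constantCoeff q * (w i * w j) := by
  have : lineMap w (q * (X i * X j))
      = (lineMap w q * Polynomial.C (w i * w j)) * Polynomial.X ^ 2 := by
    simp only [map_mul, lineMap_X]
    ring
  rw [this, Polynomial.coeff_mul_X_pow', if_pos le_rfl, Polynomial.coeff_mul_C]
  simp [lineMap_coeff_zero]

/-- Let `R = ℤ[v₁,…,v₅]/I`, where `I` is generated by
`v₁ − v₃ − v₄`, `v₂ − v₄ − v₅`, `v₁v₃`, `v₁v₄`, `v₂v₄`, `v₂v₅`, `v₃v₅`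
(variables `v₁,…,v₅` encoded as `X 0,…,X 4`). Then `v₃² ≠ 0` in `R`, i.e. the
polynomial `v₃²` does not belong to the ideal `I`. -/
theorem pentagon_quasitoric_cohomology_v3_sq_ne_zero
    (I : Ideal (MvPolynomial (Fin 5) ℤ))
    (hI : I = Ideal.span {X 0 - X 2 - X 3, X 1 - X 3 - X 4,
      X 0 * X 2, X 0 * X 3, X 1 * X 3, X 1 * X 4, X 2 * X 4}) :
    Ideal.Quotient.mk I (X 2 ^ 2) ≠ 0 := by
  intro h0
  rw [Ideal.Quotient.eq_zero_iff_mem, hI] at h0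
  obtain ⟨q1, z1, hz1, h1⟩ := Ideal.mem_span_insert.1 h0
  obtain ⟨q2, z2, hz2, rfl⟩ := Ideal.mem_span_insert.1 hz1
  obtain ⟨q3, z3, hz3, rfl⟩ := Ideal.mem_span_insert.1 hz2
  obtain ⟨q4, z4, hz4, rfl⟩ := Ideal.mem_span_insert.1 hz3
  obtain ⟨q5, z5, hz5, rfl⟩ := Ideal.mem_span_insert.1 hz4
  obtain ⟨q6, z6, hz6, rfl⟩ := Ideal.mem_span_insert.1 hz5
  obtain ⟨q7, rfl⟩ := Ideal.mem_span_singleton'.1 hz6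
  have key : ∀ w : Fin 5 → ℤ, w 0 - w 2 - w 3 = 0 → w 1 - w 3 - w 4 = 0 →
      w 2 * w 2 = constantCoeff q3 * (w 0 * w 2) + constantCoeff q4 * (w 0 * w 3)
        + constantCoeff q5 * (w 1 * w 3) + constantCoeff q6 * (w 1 * w 4)
        + constantCoeff q7 * (w 2 * w 4) := by
    intro w ha hb
    have h2 := congrArg (fun p => (lineMap w p).coeff 2) h1
    have h3 := lineMap_quad w 1 2 2
    rw [one_mul, ← pow_two] at h3
    simp only [map_add, Polynomial.coeff_add, lineMap_quad, lineMap_lin w _ _ _ _ ha,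
      lineMap_lin w _ _ _ _ hb, h3] at h2
    simp only [map_one, one_mul, Polynomial.coeff_zero, zero_add] at h2
    linarith
  have k1 := key ![0, -1, 1, -1, 0] (by simp) (by simp)
  have k2 := key ![-1, 0, 0, -1, 1] (by simp) (by simp)
  have k3 := key ![1, 1, 0, 1, 0] (by simp) (by simp)
  simp at k1 k2 k3
  linarith
end
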